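/- arXiv:1206.3021 — 3 statements merged into one kernel-verified Lean document; each statement's English description precedes it below -/
import Mathlib

section
/- For every point P and every line L of 𝒢(V), there exists a point incident with L that is not neighboring P. (In particular, no point neighbors all points of a line.) -/
/-! Context: `K` a field, `V` a commutative, associative, unital 2-dimensional `K`-algebra in
which every element is a product of two elements; `V₀ = K·r ∪ K·s` is the set of non-units.
Points and lines of the geometry `𝒢(V)` are represented by triples in `V × V × V` with
trivial annihilator, up to multiplication by a unit. -/

/-- The triple `p` has trivial annihilator (so `V*p` is a point/line of `𝒢(V)`). -/
def TrivAnn {V : Type} [CommRing V] (p : V × V × V) : Prop :=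
  ∀ v : V, v * p.1 = 0 → v * p.2.1 = 0 → v * p.2.2 = 0 → v = 0

/-- The point (represented by) `p` is incident with the line (represented by) `L`. -/
def Incid {V : Type} [CommRing V] (p L : V × V × V) : Prop :=
  L.1 * p.1 + L.2.1 * p.2.1 + L.2.2 * p.2.2 = 0

/-- Two points (or two lines) are neighboring. -/
def Nbr {V : Type} [CommRing V] (p q : V × V × V) : Prop :=
  ∃ k l : V, (k, l) ≠ ((0 : V), (0 : V)) ∧
    (k * p.1, k * p.2.1, k * p.2.2) = (l * q.1, l * q.2.1, l * q.2.2)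

/-- The point `p` and the line `L` are neighboring. -/
def NbrPL {V : Type} [CommRing V] (p L : V × V × V) : Prop :=
  ¬ IsUnit (L.1 * p.1 + L.2.1 * p.2.1 + L.2.2 * p.2.2)

/-- `p` and `q` represent the same point (resp. line) of `𝒢(V)`. -/
def SameCls {V : Type} [CommRing V] (p q : V × V × V) : Prop :=
  ∃ u : V, IsUnit u ∧ (u * p.1, u * p.2.1, u * p.2.2) = q

/-- The standing hypotheses on the algebra `V` over `K`: it is `2`-dimensional, every element
is a product of two elements, and the set of non-units is `K·r ∪ K·s`. -/
def GoodAlg (K : Type) [Field K] (V : Type) [CommRing V] [Algebra K V] (r s : V) : Prop :=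
  Module.finrank K V = 2 ∧ (∀ v : V, ∃ a b : V, v = a * b) ∧
    (∀ v : V, ¬ IsUnit v ↔ ((∃ k : K, v = k • r) ∨ (∃ k : K, v = k • s)))

/-! In coordinates, `Q = L ⨯₃ u` is orthogonal to `L` for every `u`, and it is a point that does
not neighbor `P` as soon as `P ⨯₃ (L ⨯₃ u)` has trivial annihilator. A vector has trivial
annihilator if it is nonzero modulo every maximal ideal, so by the Chinese remainder theorem it is
enough to find `u` over the residue fields. There `P` and `L` stay nonzero because every maximal
ideal of `V` is annihilated by some nonzero element, and for nonzero `P` and `L` the vector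
`P ⨯₃ (L ⨯₃ u) = (P ⬝ᵥ u) • L - (P ⬝ᵥ L) • u` does not vanish identically in `u`. -/

open Matrix

theorem exists_dotProduct_smul_ne_dotProduct_smul {R ι : Type*} [Semiring R] [NoZeroDivisors R]
    [Fintype ι] [Nontrivial ι] {v w : ι → R} (hv : v ≠ 0) (hw : w ≠ 0) :
    ∃ u : ι → R, (v ⬝ᵥ u) • w ≠ (v ⬝ᵥ w) • u := by
  classical
  by_contra! h
  have h_single (j : ι) : v j • w = (v ⬝ᵥ w) • Pi.single j 1 := by
    simpa only [dotProduct_single_one] using h (Pi.single j 1)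
  have h_diag (j : ι) : v j * w j = v ⬝ᵥ w := by simpa using congrFun (h_single j) j
  have h_off {j k : ι} (hkj : k ≠ j) : v j * w k = 0 := by
    simpa [hkj] using congrFun (h_single j) k
  obtain ⟨i, hvi⟩ := Function.ne_iff.mp hv
  obtain ⟨j, hji⟩ := exists_ne i
  have hwj : w j = 0 := (mul_eq_zero.mp (h_off hji)).resolve_left hvi
  have h_dot : v ⬝ᵥ w = 0 := by rw [← h_diag j, hwj, mul_zero]
  have h_smul : v i • w = 0 := by rw [h_single i, h_dot, zero_smul]
  exact hw (funext fun k ↦ (mul_eq_zero.mp (congrFun h_smul k)).resolve_left hvi)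

section CrossProduct

variable {R : Type*} [CommRing R]

theorem exists_cross_cross_ne_zero [NoZeroDivisors R] {v w : Fin 3 → R} (hv : v ≠ 0)
    (hw : w ≠ 0) : ∃ u : Fin 3 → R, v ⨯₃ (w ⨯₃ u) ≠ 0 := by
  obtain ⟨u, hu⟩ := exists_dotProduct_smul_ne_dotProduct_smul hv hw
  refine ⟨u, ?_⟩
  rwa [cross_cross_eq_smul_sub_smul', dotProduct_comm w v, sub_ne_zero]

theorem map_comp_cross {S : Type*} [CommRing S] (f : R →+* S) (v w : Fin 3 → R) :
    f ∘ (v ⨯₃ w) = (f ∘ v) ⨯₃ (f ∘ w) := by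
  ext i
  fin_cases i <;> simp [cross_apply]

theorem eq_zero_and_eq_zero_of_smul_eq_smul {v w : Fin 3 → R}
    (hvw : Ideal.torsionOf R (Fin 3 → R) (v ⨯₃ w) = ⊥) {k l : R} (h : k • v = l • w) :
    k = 0 ∧ l = 0 := by
  have hk : k • (v ⨯₃ w) = 0 := by
    rw [← LinearMap.map_smul₂, h, LinearMap.map_smul₂, cross_self, smul_zero]
  have hl : l • (v ⨯₃ w) = 0 := by rw [← map_smul, ← h, map_smul, cross_self, smul_zero]
  rw [← Ideal.mem_torsionOf_iff, hvw, Ideal.mem_bot] at hk hl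
  exact ⟨hk, hl⟩

end CrossProduct

theorem torsionOf_le_torsionOf_map {R M N : Type*} [Semiring R] [AddCommMonoid M] [Module R M]
    [AddCommMonoid N] [Module R N] (f : M →ₗ[R] N) (x : M) :
    Ideal.torsionOf R M x ≤ Ideal.torsionOf R N (f x) := fun a ha ↦ by
  rw [Ideal.mem_torsionOf_iff] at ha ⊢
  rw [← map_smul, ha, map_zero]

theorem isFractionRing_self_of_isArtinianRing (R : Type*) [CommRing R] [IsArtinianRing R] :
    IsFractionRing R R :=
  IsFractionRing.self_iff_nonZeroDivisors_le_isUnit.mpr fun _ ↦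
    IsArtinianRing.isUnit_of_mem_nonZeroDivisors

section MaximalIdeals

variable {R ι : Type*} [CommRing R]

theorem torsionOf_eq_bot_of_forall_mk_comp_ne_zero {v : ι → R}
    (hv : ∀ m : MaximalSpectrum R, Ideal.Quotient.mk m.asIdeal ∘ v ≠ 0) :
    Ideal.torsionOf R (ι → R) v = ⊥ := by
  refine (Submodule.eq_bot_iff _).mpr fun r hr ↦ ?_
  by_contra hr0
  -- All coordinates of `v` lie in the annihilator of `r`, which is proper.
  obtain ⟨m, hm, hrm⟩ := Ideal.exists_le_maximal (Ideal.torsionOf R R r)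
    (mt (Ideal.torsionOf_eq_top_iff R r).mp hr0)
  refine hv ⟨m, hm⟩ (funext fun i ↦ Ideal.Quotient.eq_zero_iff_mem.mpr (hrm ?_))
  rw [Ideal.mem_torsionOf_iff, smul_eq_mul, mul_comm]
  exact congrFun hr i

theorem mk_comp_ne_zero_of_torsionOf_eq_bot [IsNoetherianRing R] [IsFractionRing R R] {v : ι → R}
    (hv : Ideal.torsionOf R (ι → R) v = ⊥) (m : Ideal R) [hm : m.IsMaximal] :
    Ideal.Quotient.mk m ∘ v ≠ 0 := by
  intro hvm
  have hdisj : Disjoint (m : Set R) (nonZeroDivisors R) :=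
    Set.disjoint_left.mpr fun x hxm hx ↦ hm.ne_top <| m.eq_top_of_isUnit_mem hxm
      (IsFractionRing.self_iff_nonZeroDivisors_le_isUnit.mp ‹_› hx)
  obtain ⟨r, hrm, hr0⟩ := SetLike.exists_of_lt
    (Ideal.bot_lt_annihilator_of_disjoint_nonZeroDivisors hdisj)
  have hrv : r ∈ Ideal.torsionOf R (ι → R) v := by
    rw [Ideal.mem_torsionOf_iff]
    exact funext fun i ↦ Submodule.mem_annihilator.mp hrm (v i)
      (Ideal.Quotient.eq_zero_iff_mem.mp (congrFun hvm i))
  exact hr0 (hv ▸ hrv)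

variable [Finite (MaximalSpectrum R)]

theorem exists_forall_mk_comp_eq (x : ∀ m : MaximalSpectrum R, ι → R ⧸ m.asIdeal) :
    ∃ y : ι → R, ∀ m : MaximalSpectrum R, Ideal.Quotient.mk m.asIdeal ∘ y = x m := by
  have hcop : Pairwise (Function.onFun IsCoprime fun m : MaximalSpectrum R ↦ m.asIdeal) :=
    fun m n hmn ↦ Ideal.isCoprime_of_isMaximal (MaximalSpectrum.ext_iff.ne.mp hmn)
  choose y hy using fun i ↦ Ideal.pi_quotient_surjective hcop fun m ↦ x m i
  exact ⟨y, fun m ↦ funext fun i ↦ hy i m⟩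

theorem exists_torsionOf_cross_cross_eq_bot {v w : Fin 3 → R}
    (hv : ∀ m : MaximalSpectrum R, Ideal.Quotient.mk m.asIdeal ∘ v ≠ 0)
    (hw : ∀ m : MaximalSpectrum R, Ideal.Quotient.mk m.asIdeal ∘ w ≠ 0) :
    ∃ u : Fin 3 → R, Ideal.torsionOf R (Fin 3 → R) (v ⨯₃ (w ⨯₃ u)) = ⊥ := by
  choose x hx using fun m ↦ exists_cross_cross_ne_zero (hv m) (hw m)
  obtain ⟨u, hu⟩ := exists_forall_mk_comp_eq x
  refine ⟨u, torsionOf_eq_bot_of_forall_mk_comp_ne_zero fun m ↦ ?_⟩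
  rw [map_comp_cross, map_comp_cross, hu m]
  exact hx m

end MaximalIdeals

/-- Triples `(x, y, z)`, the homogeneous coordinates of the geometry, as vectors `![x, y, z]`, so
that the dot product and the cross product apply to them. -/
def tripleEquivVec (R : Type*) : R × R × R ≃ (Fin 3 → R) where
  toFun p := ![p.1, p.2.1, p.2.2]
  invFun v := (v 0, v 1, v 2)
  left_inv _ := rfl
  right_inv v := by
    ext i
    fin_cases i <;> rfl

theorem tripleEquivVec_apply {R : Type*} (p : R × R × R) :
    tripleEquivVec R p = ![p.1, p.2.1, p.2.2] :=
  rfl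

section Geometry

variable {V : Type} [CommRing V] {p q L : V × V × V}

theorem trivAnn_iff_torsionOf_eq_bot :
    TrivAnn p ↔ Ideal.torsionOf V (Fin 3 → V) (tripleEquivVec V p) = ⊥ := by
  simp [TrivAnn, Submodule.eq_bot_iff, tripleEquivVec_apply]

theorem incid_iff_dotProduct_eq_zero :
    Incid p L ↔ tripleEquivVec V L ⬝ᵥ tripleEquivVec V p = 0 := by
  rw [tripleEquivVec_apply, tripleEquivVec_apply, vec3_dotProduct', Incid]

theorem not_nbr_of_torsionOf_cross_eq_bot
    (h : Ideal.torsionOf V (Fin 3 → V) (tripleEquivVec V p ⨯₃ tripleEquivVec V q) = ⊥) :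
    ¬ Nbr p q := by
  rintro ⟨k, l, hkl, heq⟩
  have hsmul : k • tripleEquivVec V p = l • tripleEquivVec V q := by
    simpa only [tripleEquivVec_apply, smul_vec3, smul_eq_mul] using congrArg (tripleEquivVec V) heq
  exact hkl (Prod.mk_eq_zero.mpr (eq_zero_and_eq_zero_of_smul_eq_smul h hsmul))

theorem stmt5_general [IsNoetherianRing V] [IsFractionRing V V] (P L : V × V × V)
    (hP : TrivAnn P) (hL : TrivAnn L) :
    ∃ Q : V × V × V, TrivAnn Q ∧ Incid Q L ∧ ¬ Nbr P Q := by
  rw [trivAnn_iff_torsionOf_eq_bot] at hP hL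
  obtain ⟨u, hu⟩ := exists_torsionOf_cross_cross_eq_bot
    (fun m ↦ mk_comp_ne_zero_of_torsionOf_eq_bot hP m.asIdeal)
    (fun m ↦ mk_comp_ne_zero_of_torsionOf_eq_bot hL m.asIdeal)
  obtain ⟨Q, hQ⟩ := (tripleEquivVec V).surjective (tripleEquivVec V L ⨯₃ u)
  rw [← hQ] at hu
  refine ⟨Q, ?_, ?_, not_nbr_of_torsionOf_cross_eq_bot hu⟩
  · rw [trivAnn_iff_torsionOf_eq_bot, eq_bot_iff, ← hu]
    exact torsionOf_le_torsionOf_map (crossProduct (tripleEquivVec V P)) _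
  · rw [incid_iff_dotProduct_eq_zero, hQ, dot_self_cross]

end Geometry

theorem GoodAlg.isArtinianRing {K : Type} [Field K] {V : Type} [CommRing V] [Algebra K V] {r s : V}
    (hV : GoodAlg K V r s) : IsArtinianRing V :=
  have : Module.Finite K V := Module.finite_of_finrank_eq_succ hV.1
  IsArtinianRing.of_finite K V

/-- For every point `P` and every line `L` of `𝒢(V)` there is a point
incident with `L` which does not neighbor `P`; in particular no point neighbors all the
points of a line. -/
theorem stmt5 (K : Type) [Field K] (V : Type) [CommRing V] [Algebra K V] (r s : V)
    (hV : GoodAlg K V r s)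
    (P L : V × V × V) (hP : TrivAnn P) (hL : TrivAnn L) :
    ∃ Q : V × V × V, TrivAnn Q ∧ Incid Q L ∧ ¬ Nbr P Q := by
  have := hV.isArtinianRing
  have := isFractionRing_self_of_isArtinianRing V
  exact stmt5_general P L hP hL
end

section
/- A triple (P₁,P₂,P₃) of points of 𝒢(V) is a proper ordered triangle if and only if, after some permutation of the three points, P₁ and P₂ are non-neighboring and P₃ is not neighboring the unique line P₁P₂ through P₁ and P₂. -/
/-- A proper ordered triangle: three pairwise non-neighboring points such that the three
(unique) joining lines are pairwise non-neighboring. -/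
def ProperTri {V : Type} [CommRing V] (P₁ P₂ P₃ : V × V × V) : Prop :=
  ¬ Nbr P₁ P₂ ∧ ¬ Nbr P₂ P₃ ∧ ¬ Nbr P₃ P₁ ∧
  ∃ L₁₂ L₂₃ L₃₁ : V × V × V,
    TrivAnn L₁₂ ∧ TrivAnn L₂₃ ∧ TrivAnn L₃₁ ∧
    Incid P₁ L₁₂ ∧ Incid P₂ L₁₂ ∧ Incid P₂ L₂₃ ∧ Incid P₃ L₂₃ ∧
    Incid P₃ L₃₁ ∧ Incid P₁ L₃₁ ∧
    ¬ Nbr L₁₂ L₂₃ ∧ ¬ Nbr L₂₃ L₃₁ ∧ ¬ Nbr L₃₁ L₁₂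

/-!
Put `d = det (P₁, P₂, P₃)` and let `cross` be the vector product. Both sides of the equivalence say
that `d` is a unit, a condition which does not depend on the order of the points. Points `p`, `q`
are non-neighboring iff the triple `cross p q` has trivial annihilator. In a zero-dimensional ring
such a triple is unimodular, so that every line through `p` and `q` is a multiple of
`cross p q`. Evaluating `u • cross P₁ P₂` at `P₃` gives `u * d`, which settles the condition on a
point and a line, and `cross (cross P₁ P₂) (cross P₂ P₃) = d • P₂` settles the one on the sides.
-/

theorem annihilator_pow_eq_bot {R : Type*} [CommSemiring R] {I : Ideal R}
    (hI : Submodule.annihilator I = ⊥) (n : ℕ) : Submodule.annihilator (I ^ n) = ⊥ := by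
  induction n with
  | zero =>
    refine (Submodule.eq_bot_iff _).2 fun x hx ↦ ?_
    simpa using Submodule.mem_annihilator.1 hx 1 (by simp)
  | succ n ih =>
    refine (Submodule.eq_bot_iff _).2 fun x hx ↦ ?_
    rw [Submodule.mem_annihilator] at hx
    have hxI : ∀ y ∈ I, x * y = 0 := fun y hy ↦ by
      rw [← Submodule.mem_bot R, ← ih, Submodule.mem_annihilator]
      intro z hz
      rw [smul_eq_mul, mul_assoc, mul_comm y z]
      exact hx _ (pow_succ I n ▸ Ideal.mul_mem_mul hz hy)
    rwa [← Submodule.mem_bot R, ← hI, Submodule.mem_annihilator]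

/- If `I ≤ m` with `m` maximal, then `I` becomes nilpotent in the zero-dimensional local ring `R_m`,
while powers of `I` still have trivial annihilator and hence do not vanish in `R_m`. -/
theorem eq_top_of_fg_of_annihilator_eq_bot {R : Type*} [CommRing R] [Ring.KrullDimLE 0 R]
    {I : Ideal R} (hfg : I.FG) (hI : Submodule.annihilator I = ⊥) : I = ⊤ := by
  by_contra hne
  obtain ⟨m, hm, hIm⟩ := Ideal.exists_le_maximal I hne
  let A := Localization.AtPrime m
  have : Ring.KrullDimLE 0 A :=
    .of_isLocalization m (Ideal.mem_minimalPrimes_iff_isPrime.2 hm.isPrime) A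
  have hnil : IsNilpotent (I.map (algebraMap R A)) := by
    rw [(hfg.map _).isNilpotent_iff_le_nilradical, Ring.KrullDimLE.nilradical_eq_maximalIdeal,
      ← Localization.AtPrime.map_eq_maximalIdeal]
    exact Ideal.map_mono hIm
  obtain ⟨n, hn⟩ := hnil
  rw [← Ideal.map_pow] at hn
  have : Module.Finite R (I ^ n : Ideal R) := .of_fg hfg.pow
  have hsupp : ⟨m, hm.isPrime⟩ ∈ Module.support R (I ^ n : Ideal R) := by
    rw [Module.mem_support_iff_of_finite]
    exact (annihilator_pow_eq_bot hI n).trans_le bot_le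
  obtain ⟨⟨x, hx⟩, hxm⟩ := Module.mem_support_iff'.1 hsupp
  have hxA : algebraMap R A x = 0 := by
    rw [← Ideal.mem_bot, ← Ideal.zero_eq_bot, ← hn]
    exact Ideal.mem_map_of_mem _ hx
  obtain ⟨⟨s, hs⟩, hsx⟩ := (IsLocalization.map_eq_zero_iff m.primeCompl A x).1 hxA
  exact hxm s hs (Subtype.ext hsx)

section Triples

variable {V : Type} [CommRing V] {p q r L M : V × V × V}

theorem trivAnn_iff : TrivAnn p ↔ ∀ v : V, v • p = 0 → v = 0 := by
  simp only [TrivAnn, Prod.ext_iff, Prod.smul_fst, Prod.smul_snd, smul_eq_mul, Prod.fst_zero,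
    Prod.snd_zero, and_imp]

theorem TrivAnn.smul {a : V} (hp : TrivAnn p) (ha : IsUnit a) : TrivAnn (a • p) := by
  rw [trivAnn_iff] at hp ⊢
  intro v hv
  exact ha.mul_left_eq_zero.1 (hp _ (by rw [mul_smul, hv]))

theorem TrivAnn.exists_eq_one [Ring.KrullDimLE 0 V] (hp : TrivAnn p) :
    ∃ x y z : V, x * p.1 + y * p.2.1 + z * p.2.2 = 1 := by
  have hann : Submodule.annihilator (Ideal.span {p.1, p.2.1, p.2.2}) = ⊥ := by
    refine (Submodule.eq_bot_iff _).2 fun v hv ↦ ?_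
    have hv' : ∀ y ∈ ({p.1, p.2.1, p.2.2} : Set V), v * y = 0 := fun y hy ↦
      Submodule.mem_annihilator.1 hv y (Ideal.subset_span hy)
    exact hp v (hv' _ (by simp)) (hv' _ (by simp)) (hv' _ (by simp))
  have htop := eq_top_of_fg_of_annihilator_eq_bot
    (Submodule.fg_span (Set.toFinite {p.1, p.2.1, p.2.2})) hann
  obtain ⟨x, y, z, h⟩ := Submodule.mem_span_triple.1 ((Ideal.eq_top_iff_one _).1 htop)
  exact ⟨x, y, z, h⟩

theorem isUnit_of_trivAnn_smul [Ring.KrullDimLE 0 V] {a : V} (h : TrivAnn (a • p)) :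
    IsUnit a := by
  obtain ⟨x, y, z, hxyz⟩ := h.exists_eq_one
  refine IsUnit.of_mul_eq_one (x * p.1 + y * p.2.1 + z * p.2.2) ?_
  rw [← hxyz]
  simp only [Prod.smul_fst, Prod.smul_snd, smul_eq_mul]
  ring

/-- The vector product of two triples: the coordinates of the line joining two points and, dually,
of the point common to two lines. -/
def cross (p q : V × V × V) : V × V × V :=
  (p.2.1 * q.2.2 - p.2.2 * q.2.1, p.2.2 * q.1 - p.1 * q.2.2, p.1 * q.2.1 - p.2.1 * q.1)

/-- The determinant of the matrix whose rows are the coordinates of three points. -/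
def tripleDet (p q r : V × V × V) : V :=
  Matrix.det !![p.1, p.2.1, p.2.2; q.1, q.2.1, q.2.2; r.1, r.2.1, r.2.2]

theorem incid_cross_left (p q : V × V × V) : Incid p (cross p q) := by
  simp only [cross, Incid]
  ring

theorem incid_cross_right (p q : V × V × V) : Incid q (cross p q) := by
  simp only [cross, Incid]
  ring

theorem smul_cross_smul (a b : V) (p q : V × V × V) :
    cross (a • p) (b • q) = (a * b) • cross p q := by
  ext <;> simp only [cross, Prod.smul_fst, Prod.smul_snd, smul_eq_mul] <;> ring

theorem cross_dot_eq_tripleDet (p q r : V × V × V) :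
    (cross p q).1 * r.1 + (cross p q).2.1 * r.2.1 + (cross p q).2.2 * r.2.2 = tripleDet p q r := by
  simp only [cross, tripleDet, Matrix.det_fin_three, Matrix.of_apply, Matrix.cons_val',
    Matrix.cons_val_zero, Matrix.cons_val_fin_one, Matrix.cons_val_one, Matrix.cons_val]
  ring

theorem cross_cross_cross (p q r : V × V × V) :
    cross (cross p q) (cross q r) = tripleDet p q r • q := by
  rw [← cross_dot_eq_tripleDet]
  ext <;> simp only [cross, Prod.smul_fst, Prod.smul_snd, smul_eq_mul] <;> ring

theorem tripleDet_rotate (p q r : V × V × V) : tripleDet q r p = tripleDet p q r := by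
  simp only [← cross_dot_eq_tripleDet, cross]
  ring

theorem tripleDet_perm (P : Fin 3 → V × V × V) (σ : Equiv.Perm (Fin 3)) :
    tripleDet (P (σ 0)) (P (σ 1)) (P (σ 2)) =
      Equiv.Perm.sign σ * tripleDet (P 0) (P 1) (P 2) := by
  let M (Q : Fin 3 → V × V × V) : Matrix (Fin 3) (Fin 3) V :=
    Matrix.of fun i ↦ ![(Q i).1, (Q i).2.1, (Q i).2.2]
  have tripleDet_eq (Q : Fin 3 → V × V × V) : tripleDet (Q 0) (Q 1) (Q 2) = (M Q).det := by
    simp [tripleDet, Matrix.det_fin_three, M]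
  rw [tripleDet_eq P, ← Matrix.det_permute]
  exact tripleDet_eq (P ∘ σ)

theorem isUnit_tripleDet_perm (P : Fin 3 → V × V × V) (σ : Equiv.Perm (Fin 3)) :
    IsUnit (tripleDet (P (σ 0)) (P (σ 1)) (P (σ 2))) ↔ IsUnit (tripleDet (P 0) (P 1) (P 2)) := by
  have isUnit_sign : IsUnit ((Equiv.Perm.sign σ : ℤ) : V) :=
    (Equiv.Perm.sign σ).isUnit.map (Int.castRingHom V)
  rw [tripleDet_perm, IsUnit.mul_iff, and_iff_right isUnit_sign]

theorem not_nbr_of_trivAnn_cross (h : TrivAnn (cross p q)) : ¬ Nbr p q := by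
  rintro ⟨k, l, hkl, heq⟩
  simp only [Prod.mk.injEq] at heq
  obtain ⟨h₁, h₂, h₃⟩ := heq
  refine hkl (Prod.ext (h k ?_ ?_ ?_) (h l ?_ ?_ ?_)) <;> simp only [cross]
  · linear_combination q.2.2 * h₂ - q.2.1 * h₃
  · linear_combination q.1 * h₃ - q.2.2 * h₁
  · linear_combination q.2.1 * h₁ - q.1 * h₂
  · linear_combination p.2.2 * h₂ - p.2.1 * h₃
  · linear_combination p.1 * h₃ - p.2.2 * h₁
  · linear_combination p.2.1 * h₁ - p.1 * h₂

/- If `v` kills `cross p q`, then `(v * qᵢ) • p = (v * pᵢ) • q` for each coordinate `i`. -/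
theorem trivAnn_cross_of_not_nbr (hp : TrivAnn p) (h : ¬ Nbr p q) : TrivAnn (cross p q) := by
  intro v h₁ h₂ h₃
  simp only [cross] at h₁ h₂ h₃
  have eq_zero_of_smul_eq (k l : V) (e₁ : k * p.1 = l * q.1) (e₂ : k * p.2.1 = l * q.2.1)
      (e₃ : k * p.2.2 = l * q.2.2) : l = 0 := by
    by_contra hl
    exact h ⟨k, l, fun e ↦ hl (congrArg Prod.snd e), by rw [e₁, e₂, e₃]⟩
  apply hp
  · apply eq_zero_of_smul_eq (v * q.1)
    · ring
    · linear_combination -h₃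
    · linear_combination h₂
  · apply eq_zero_of_smul_eq (v * q.2.1)
    · linear_combination h₃
    · ring
    · linear_combination -h₁
  · apply eq_zero_of_smul_eq (v * q.2.2)
    · linear_combination -h₂
    · linear_combination h₁
    · ring

theorem exists_eq_smul_cross_of_incid [Ring.KrullDimLE 0 V] (h : TrivAnn (cross p q))
    (hp : Incid p L) (hq : Incid q L) : ∃ u : V, L = u • cross p q := by
  obtain ⟨x, y, z, hw⟩ := h.exists_eq_one
  simp only [cross, Incid] at hw hp hq
  refine ⟨x * L.1 + y * L.2.1 + z * L.2.2, ?_⟩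
  ext <;> simp only [cross, Prod.smul_fst, Prod.smul_snd, smul_eq_mul]
  · linear_combination
      (-L.1) * hw - (y * q.2.2 - z * q.2.1) * hp + (y * p.2.2 - z * p.2.1) * hq
  · linear_combination
      (-L.2.1) * hw - (z * q.1 - x * q.2.2) * hp + (z * p.1 - x * p.2.2) * hq
  · linear_combination
      (-L.2.2) * hw - (x * q.2.1 - y * q.1) * hp + (x * p.2.1 - y * p.1) * hq

theorem nbrPL_smul_cross_iff (u : V) (p q r : V × V × V) :
    NbrPL r (u • cross p q) ↔ ¬ IsUnit (u * tripleDet p q r) := by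
  rw [NbrPL, ← cross_dot_eq_tripleDet]
  simp only [Prod.smul_fst, Prod.smul_snd, smul_eq_mul, mul_add, mul_assoc]

theorem trivAnn_cross_of_isUnit_tripleDet (h : IsUnit (tripleDet p q r)) :
    TrivAnn (cross p q) := by
  intro v h₁ h₂ h₃
  refine h.mul_left_eq_zero.1 ?_
  rw [← cross_dot_eq_tripleDet]
  linear_combination r.1 * h₁ + r.2.1 * h₂ + r.2.2 * h₃

theorem not_nbr_cross_cross_of_isUnit_tripleDet (hq : TrivAnn q) (h : IsUnit (tripleDet p q r)) :
    ¬ Nbr (cross p q) (cross q r) := by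
  apply not_nbr_of_trivAnn_cross
  rw [cross_cross_cross]
  exact hq.smul h

theorem exists_line_not_nbrPL_iff_isUnit_tripleDet [Ring.KrullDimLE 0 V] (hp : TrivAnn p) :
    (¬ Nbr p q ∧ ∃ L : V × V × V, TrivAnn L ∧ Incid p L ∧ Incid q L ∧ ¬ NbrPL r L) ↔
      IsUnit (tripleDet p q r) := by
  constructor
  · rintro ⟨hpq, L, -, hpL, hqL, hrL⟩
    obtain ⟨u, rfl⟩ := exists_eq_smul_cross_of_incid (trivAnn_cross_of_not_nbr hp hpq) hpL hqL
    rw [nbrPL_smul_cross_iff, not_not] at hrL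
    exact isUnit_of_mul_isUnit_right hrL
  · intro h
    have hpq := trivAnn_cross_of_isUnit_tripleDet h
    refine ⟨not_nbr_of_trivAnn_cross hpq, cross p q, hpq, incid_cross_left p q,
      incid_cross_right p q, ?_⟩
    rwa [NbrPL, not_not, cross_dot_eq_tripleDet]

theorem isUnit_tripleDet_of_not_nbr_lines [Ring.KrullDimLE 0 V] (hp : TrivAnn p) (hq : TrivAnn q)
    (hL : TrivAnn L) (hpq : ¬ Nbr p q) (hqr : ¬ Nbr q r) (hpL : Incid p L) (hqL : Incid q L)
    (hqM : Incid q M) (hrM : Incid r M) (hLM : ¬ Nbr L M) : IsUnit (tripleDet p q r) := by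
  obtain ⟨u, rfl⟩ := exists_eq_smul_cross_of_incid (trivAnn_cross_of_not_nbr hp hpq) hpL hqL
  obtain ⟨w, rfl⟩ := exists_eq_smul_cross_of_incid (trivAnn_cross_of_not_nbr hq hqr) hqM hrM
  have h := trivAnn_cross_of_not_nbr hL hLM
  rw [smul_cross_smul, cross_cross_cross, smul_smul] at h
  exact isUnit_of_mul_isUnit_right (isUnit_of_trivAnn_smul h)

theorem properTri_of_isUnit_tripleDet (hp : TrivAnn p) (hq : TrivAnn q) (hr : TrivAnn r)
    (hpqr : IsUnit (tripleDet p q r)) : ProperTri p q r := by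
  have hqrp : IsUnit (tripleDet q r p) := by rwa [tripleDet_rotate]
  have hrpq : IsUnit (tripleDet r p q) := by rwa [tripleDet_rotate]
  have hpq := trivAnn_cross_of_isUnit_tripleDet hpqr
  have hqr := trivAnn_cross_of_isUnit_tripleDet hqrp
  have hrp := trivAnn_cross_of_isUnit_tripleDet hrpq
  exact ⟨not_nbr_of_trivAnn_cross hpq, not_nbr_of_trivAnn_cross hqr, not_nbr_of_trivAnn_cross hrp,
    cross p q, cross q r, cross r p, hpq, hqr, hrp,
    incid_cross_left p q, incid_cross_right p q, incid_cross_left q r, incid_cross_right q r,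
    incid_cross_left r p, incid_cross_right r p,
    not_nbr_cross_cross_of_isUnit_tripleDet hq hpqr,
    not_nbr_cross_cross_of_isUnit_tripleDet hr hqrp,
    not_nbr_cross_cross_of_isUnit_tripleDet hp hrpq⟩

theorem properTri_iff_isUnit_tripleDet [Ring.KrullDimLE 0 V] (hp : TrivAnn p) (hq : TrivAnn q)
    (hr : TrivAnn r) : ProperTri p q r ↔ IsUnit (tripleDet p q r) := by
  refine ⟨?_, properTri_of_isUnit_tripleDet hp hq hr⟩
  rintro ⟨hpq, hqr, -, L, M, -, hL, -, -, hpL, hqL, hqM, hrM, -, -, hLM, -, -⟩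
  exact isUnit_tripleDet_of_not_nbr_lines hp hq hL hpq hqr hpL hqL hqM hrM hLM

end Triples

theorem stmt8_general (V : Type) [CommRing V] [Ring.KrullDimLE 0 V]
    (P₁ P₂ P₃ : V × V × V) (hP₁ : TrivAnn P₁) (hP₂ : TrivAnn P₂) (hP₃ : TrivAnn P₃) :
    ProperTri P₁ P₂ P₃ ↔
      ∃ σ : Equiv.Perm (Fin 3),
        ¬ Nbr (![P₁, P₂, P₃] (σ 0)) (![P₁, P₂, P₃] (σ 1)) ∧
        ∃ L : V × V × V, TrivAnn L ∧ Incid (![P₁, P₂, P₃] (σ 0)) L ∧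
          Incid (![P₁, P₂, P₃] (σ 1)) L ∧ ¬ NbrPL (![P₁, P₂, P₃] (σ 2)) L := by
  have hP : ∀ i, TrivAnn (![P₁, P₂, P₃] i) := by simp [Fin.forall_fin_succ, hP₁, hP₂, hP₃]
  simp only [exists_line_not_nbrPL_iff_isUnit_tripleDet (hP _), isUnit_tripleDet_perm, exists_const]
  exact properTri_iff_isUnit_tripleDet hP₁ hP₂ hP₃

/-- A triple `(P₁,P₂,P₃)` of points of `𝒢(V)` is a proper ordered triangle
iff after some permutation of the three points, `P₁` and `P₂` are non-neighboring and `P₃`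
does not neighbor the (unique) line through `P₁` and `P₂`. -/
theorem stmt8 (K : Type) [Field K] (V : Type) [CommRing V] [Algebra K V] (r s : V)
    (hV : GoodAlg K V r s)
    (P₁ P₂ P₃ : V × V × V) (hP₁ : TrivAnn P₁) (hP₂ : TrivAnn P₂) (hP₃ : TrivAnn P₃) :
    ProperTri P₁ P₂ P₃ ↔
      ∃ σ : Equiv.Perm (Fin 3),
        ¬ Nbr (![P₁, P₂, P₃] (σ 0)) (![P₁, P₂, P₃] (σ 1)) ∧
        ∃ L : V × V × V, TrivAnn L ∧ Incid (![P₁, P₂, P₃] (σ 0)) L ∧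
          Incid (![P₁, P₂, P₃] (σ 1)) L ∧ ¬ NbrPL (![P₁, P₂, P₃] (σ 2)) L := by
  have : Module.Finite K V := Module.finite_of_finrank_pos (hV.1 ▸ two_pos)
  have : IsArtinianRing V := .of_finite K V
  exact stmt8_general V P₁ P₂ P₃ hP₁ hP₂ hP₃
end

section
/- Let P₁ = V*(x₁,y₁,z₁) and P₂ = V*(x₂,y₂,z₂) be two non-neighboring points of 𝒢(V). Then the points of the unique line P₁P₂ through P₁ and P₂ are exactly the classes V*(a₁x₁+a₂x₂, a₁y₁+a₂y₂, a₁z₁+a₂z₂) where a₁,a₂ ∈ V are such that at most one of a₁,a₂ lies in K·r and at most one of a₁,a₂ lies in K·s; moreover, for every such pair (a₁,a₂) the triple (a₁x₁+a₂x₂, a₁y₁+a₂y₂, a₁z₁+a₂z₂) has trivial annihilator and the corresponding point is incident with P₁P₂. -/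
/-!
In an Artinian ring every proper ideal has a nonzero annihilator, so a triple with trivial
annihilator is unimodular. Two non-neighboring points `P₁`, `P₂` on a line `L` therefore give an
injection `R² → R³` whose image lies in the kernel of the surjection `R³ → R` defined by `L`.
Completing it by a section of this surjection gives an injective, hence surjective, endomorphism
of `R³`, so that kernel is exactly the set of combinations `a₁P₁ + a₂P₂`. Such a combination has
trivial annihilator iff `a₁` and `a₂` do not lie in a common proper ideal. In `V` a proper ideal is
a `K`-submodule contained in `K·r ∪ K·s`, hence in `K·r` or in `K·s`. In particular a maximal ideal
is Artinian over `K`, which makes `V` Artinian.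
-/

theorem isCoprime_iff_span_pair_eq_top {R : Type*} [CommRing R] {a b : R} :
    IsCoprime a b ↔ Ideal.span {a, b} = ⊤ := by
  rw [Ideal.span_insert, Ideal.sup_eq_top_iff_isCoprime]

theorem exists_ne_zero_forall_mul_eq_zero_of_ne_top {R : Type*} [CommRing R] [IsArtinianRing R]
    {I : Ideal R} (hI : I ≠ ⊤) : ∃ v : R, v ≠ 0 ∧ ∀ x ∈ I, v * x = 0 := by
  obtain ⟨m, hm, hIm⟩ := I.exists_le_maximal hI
  have hmin : m ∈ (Module.annihilator R R).minimalPrimes := by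
    rw [Module.annihilator_eq_bot.mpr inferInstance]
    exact m.mem_minimalPrimes_of_krullDimLE_zero
  obtain ⟨-, v, rfl⟩ := isAssociatedPrime_iff.mp
    (Module.associatedPrimes.minimalPrimes_annihilator_subset_associatedPrimes R R hmin)
  refine ⟨v, ?_, fun x hx ↦ ?_⟩
  · rintro rfl
    exact hm.ne_top (by simp)
  · simpa [Submodule.mem_colon_singleton, mul_comm] using hIm hx

theorem isCoprime_iff_forall_mul_eq_zero {R : Type*} [CommRing R] [IsArtinianRing R] {a b : R} :
    IsCoprime a b ↔ ∀ v : R, v * a = 0 → v * b = 0 → v = 0 := by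
  constructor
  · rintro ⟨x, y, hxy⟩ v ha hb
    linear_combination x * ha + y * hb - v * hxy
  · intro h
    rw [isCoprime_iff_span_pair_eq_top]
    by_contra htop
    obtain ⟨v, hv0, hv⟩ := exists_ne_zero_forall_mul_eq_zero_of_ne_top htop
    exact hv0 (h v (hv a (Ideal.subset_span (by simp))) (hv b (Ideal.subset_span (by simp))))

theorem exact_of_injective_of_surjective_of_equiv_prod {R M N P : Type*} [Ring R]
    [AddCommGroup M] [Module R M] [IsArtinian R M] [AddCommGroup N] [Module R N]
    [AddCommGroup P] [Module R P] [Module.Projective R P] (e : M ≃ₗ[R] N × P)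
    {f : N →ₗ[R] M} {g : M →ₗ[R] P} (hf : Function.Injective f) (hg : Function.Surjective g)
    (hgf : g ∘ₗ f = 0) : Function.Exact f g := by
  obtain ⟨σ, hσ⟩ := Module.projective_lifting_property g .id hg
  have g_f (n : N) : g (f n) = 0 := LinearMap.congr_fun hgf n
  have g_σ (p : P) : g (σ p) = p := LinearMap.congr_fun hσ p
  have hinj : Function.Injective (f.coprod σ) := by
    rw [injective_iff_map_eq_zero]
    rintro ⟨n, p⟩ h
    rw [LinearMap.coprod_apply] at h
    have hp : p = 0 := by simpa [g_f, g_σ] using congrArg g h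
    have hn : n = 0 := hf (by simpa [hp] using h)
    rw [hn, hp, Prod.mk_zero_zero]
  have hsurj : Function.Surjective (f.coprod σ) := by
    have hcomp : Function.Surjective (f.coprod σ ∘ₗ e.toLinearMap) :=
      IsArtinian.surjective_of_injective_endomorphism _ (hinj.comp e.injective)
    exact Function.Surjective.of_comp (g := e) hcomp
  refine fun m ↦ ⟨fun hm ↦ ?_, ?_⟩
  · obtain ⟨⟨n, p⟩, rfl⟩ := hsurj m
    have hp : p = 0 := by simpa [g_f, g_σ] using hm
    exact ⟨n, by simp [hp]⟩
  · rintro ⟨n, rfl⟩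
    exact g_f n

section Geometry

variable {R : Type} [CommRing R] {P₁ P₂ L p q : R × R × R}

theorem SameCls.refl (p : R × R × R) : SameCls p p :=
  ⟨1, isUnit_one, by simp only [one_mul]⟩

theorem trivAnn_iff_forall_smul_eq_zero : TrivAnn p ↔ ∀ v : R, v • p = 0 → v = 0 := by
  simp [TrivAnn, Prod.ext_iff]

/-- The linear form `ax + by + cz` defined by the line `[a, b, c]`; its kernel is the set of
triples incident with that line. -/
def incidForm (L : R × R × R) : R × R × R →ₗ[R] R :=
  (L.1 • LinearMap.id).coprod ((L.2.1 • LinearMap.id).coprod (L.2.2 • LinearMap.id))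

theorem incidForm_eq_zero_iff : incidForm L p = 0 ↔ Incid p L := by
  simp [incidForm, Incid, add_assoc]

theorem incidForm_surjective [IsArtinianRing R] (hL : TrivAnn L) :
    Function.Surjective (incidForm L) := by
  rw [← LinearMap.range_eq_top]
  by_contra htop
  obtain ⟨v, hv0, hv⟩ := exists_ne_zero_forall_mul_eq_zero_of_ne_top htop
  exact hv0 (hL v (hv _ ⟨(1, 0, 0), by simp [incidForm]⟩)
    (hv _ ⟨(0, 1, 0), by simp [incidForm]⟩) (hv _ ⟨(0, 0, 1), by simp [incidForm]⟩))

/-- The map `(a₁, a₂) ↦ a₁P₁ + a₂P₂` parametrizing the line that joins `P₁` and `P₂`. -/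
def joinMap (P₁ P₂ : R × R × R) : R × R →ₗ[R] R × R × R :=
  (LinearMap.toSpanSingleton R _ P₁).coprod (LinearMap.toSpanSingleton R _ P₂)

theorem joinMap_apply (a : R × R) : joinMap P₁ P₂ a = a.1 • P₁ + a.2 • P₂ := by
  simp [joinMap]

theorem joinMap_injective (hP : ¬ Nbr P₁ P₂) : Function.Injective (joinMap P₁ P₂) := by
  rw [injective_iff_map_eq_zero]
  intro a ha
  rw [joinMap_apply, add_eq_zero_iff_eq_neg, ← neg_smul] at ha
  by_contra ha0
  exact hP ⟨a.1, -a.2, fun h ↦ ha0 (by simpa [Prod.ext_iff] using h), ha⟩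

theorem incidForm_comp_joinMap (h₁ : Incid P₁ L) (h₂ : Incid P₂ L) :
    incidForm L ∘ₗ joinMap P₁ P₂ = 0 := by
  rw [← incidForm_eq_zero_iff] at h₁ h₂
  refine LinearMap.ext fun a ↦ ?_
  simp [joinMap_apply, h₁, h₂]

theorem exact_joinMap_incidForm [IsArtinianRing R] (hL : TrivAnn L) (hP : ¬ Nbr P₁ P₂)
    (h₁ : Incid P₁ L) (h₂ : Incid P₂ L) : Function.Exact (joinMap P₁ P₂) (incidForm L) :=
  exact_of_injective_of_surjective_of_equiv_prod (LinearEquiv.prodAssoc R R R R).symm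
    (joinMap_injective hP) (incidForm_surjective hL) (incidForm_comp_joinMap h₁ h₂)

theorem trivAnn_joinMap_iff [IsArtinianRing R] (hP : ¬ Nbr P₁ P₂) {a : R × R} :
    TrivAnn (joinMap P₁ P₂ a) ↔ IsCoprime a.1 a.2 := by
  simp_rw [trivAnn_iff_forall_smul_eq_zero, isCoprime_iff_forall_mul_eq_zero, ← map_smul,
    map_eq_zero_iff _ (joinMap_injective hP), Prod.ext_iff, Prod.smul_fst, Prod.smul_snd,
    Prod.fst_zero, Prod.snd_zero, smul_eq_mul, and_imp]

theorem trivAnn_and_incid_iff_exists_isCoprime [IsArtinianRing R] (hL : TrivAnn L)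
    (hP : ¬ Nbr P₁ P₂) (h₁ : Incid P₁ L) (h₂ : Incid P₂ L) :
    TrivAnn q ∧ Incid q L ↔ ∃ a : R × R, IsCoprime a.1 a.2 ∧ SameCls (joinMap P₁ P₂ a) q := by
  have hexact := exact_joinMap_incidForm hL hP h₁ h₂
  constructor
  · rintro ⟨hq, hqL⟩
    obtain ⟨a, rfl⟩ := (hexact q).mp (incidForm_eq_zero_iff.mpr hqL)
    exact ⟨a, (trivAnn_joinMap_iff hP).mp hq, SameCls.refl _⟩
  · rintro ⟨a, ha, u, hu, rfl⟩
    change TrivAnn (u • joinMap P₁ P₂ a) ∧ Incid (u • joinMap P₁ P₂ a) L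
    rw [← map_smul, trivAnn_joinMap_iff hP, ← incidForm_eq_zero_iff]
    exact ⟨(isCoprime_mul_unit_left hu _ _).mpr ha, hexact.apply_apply_eq_zero _⟩

end Geometry

section Nonunits

variable {K V : Type*} [CommRing K] [CommRing V] [Algebra K V]

theorem le_or_le_of_nonunits_subset_union {N₁ N₂ : Submodule K V}
    (hN : nonunits V ⊆ (N₁ : Set V) ∪ N₂) {I : Ideal V} (hI : I ≠ ⊤) :
    I.restrictScalars K ≤ N₁ ∨ I.restrictScalars K ≤ N₂ := by
  rw [← AddSubgroupClass.subset_union]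
  exact fun x hx ↦ hN fun hu ↦ hI (I.eq_top_of_isUnit_mem hx hu)

theorem isArtinianRing_of_nonunits_subset_union {N₁ N₂ : Submodule K V}
    [IsArtinian K N₁] [IsArtinian K N₂]
    (hN : nonunits V ⊆ (N₁ : Set V) ∪ N₂) : IsArtinianRing V := by
  cases subsingleton_or_nontrivial V
  · exact isArtinian_of_finite
  obtain ⟨m, hm⟩ := Ideal.exists_maximal V
  have hmK : IsArtinian K (m.restrictScalars K) :=
    (le_or_le_of_nonunits_subset_union hN hm.ne_top).elim isArtinian_of_le isArtinian_of_le
  have hmV : IsArtinian V (m.restrictScalars K) := isArtinian_of_tower K hmK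
  let := Ideal.Quotient.field m
  have hVm : IsArtinian V (V ⧸ m) :=
    isArtinian_of_surjective_algebraMap (R := V ⧸ m) Ideal.Quotient.mk_surjective
  exact (isArtinian_iff_submodule_quotient m).mpr ⟨hmV, hVm⟩

theorem dvd_of_mem_span_singleton {a w : V} (ha : a ∈ K ∙ w) : w ∣ a := by
  obtain ⟨k, rfl⟩ := Submodule.mem_span_singleton.mp ha
  exact ⟨algebraMap K V k, by rw [Algebra.smul_def, mul_comm]⟩

theorem isCoprime_iff_of_nonunits_eq {r s a b : V}
    (hV : nonunits V = (K ∙ r : Set V) ∪ (K ∙ s)) :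
    IsCoprime a b ↔ ¬ (a ∈ K ∙ r ∧ b ∈ K ∙ r) ∧ ¬ (a ∈ K ∙ s ∧ b ∈ K ∙ s) := by
  have hr : r ∈ nonunits V := hV ▸ Or.inl (Submodule.mem_span_singleton_self r)
  have hs : s ∈ nonunits V := hV ▸ Or.inr (Submodule.mem_span_singleton_self s)
  constructor
  · have isUnit_of_mem {w : V} (h : IsCoprime a b) (ha : a ∈ K ∙ w) (hb : b ∈ K ∙ w) : IsUnit w :=
      h.isUnit_of_dvd' (dvd_of_mem_span_singleton ha) (dvd_of_mem_span_singleton hb)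
    exact fun h ↦ ⟨fun ⟨ha, hb⟩ ↦ hr (isUnit_of_mem h ha hb),
      fun ⟨ha, hb⟩ ↦ hs (isUnit_of_mem h ha hb)⟩
  · rintro ⟨hr', hs'⟩
    rw [isCoprime_iff_span_pair_eq_top]
    by_contra htop
    have ha : a ∈ Ideal.span {a, b} := Ideal.subset_span (by simp)
    have hb : b ∈ Ideal.span {a, b} := Ideal.subset_span (by simp)
    rcases le_or_le_of_nonunits_subset_union hV.subset htop with h | h
    · exact hr' ⟨h ha, h hb⟩
    · exact hs' ⟨h ha, h hb⟩

end Nonunits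

theorem stmt9_general {K : Type*} [CommRing K] [IsArtinianRing K] {V : Type} [CommRing V]
    [Algebra K V] {r s : V}
    (hV : ∀ v : V, ¬ IsUnit v ↔ (∃ k : K, v = k • r) ∨ (∃ k : K, v = k • s))
    {P₁ P₂ L : V × V × V} (hL : TrivAnn L) (hP : ¬ Nbr P₁ P₂)
    (h₁ : Incid P₁ L) (h₂ : Incid P₂ L) (q : V × V × V) :
    TrivAnn q ∧ Incid q L ↔ ∃ a₁ a₂ : V,
      ¬ ((∃ k : K, a₁ = k • r) ∧ (∃ k : K, a₂ = k • r)) ∧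
      ¬ ((∃ k : K, a₁ = k • s) ∧ (∃ k : K, a₂ = k • s)) ∧
      SameCls (a₁ • P₁ + a₂ • P₂) q := by
  have hspan : nonunits V = (K ∙ r : Set V) ∪ (K ∙ s) := by
    ext v
    simp [hV, Submodule.mem_span_singleton, eq_comm]
  have : IsArtinianRing V := isArtinianRing_of_nonunits_subset_union hspan.subset
  rw [trivAnn_and_incid_iff_exists_isCoprime hL hP h₁ h₂]
  simp only [Prod.exists, joinMap_apply, isCoprime_iff_of_nonunits_eq hspan,
    Submodule.mem_span_singleton, eq_comm, and_assoc]

/-- Parametrization of the points of the line through two non-neighboring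
points `P₁ = V*(x₁,y₁,z₁)` and `P₂ = V*(x₂,y₂,z₂)`: they are exactly the classes
`V*(a₁x₁+a₂x₂, a₁y₁+a₂y₂, a₁z₁+a₂z₂)` with at most one of `a₁,a₂` in `K·r` and at most one
in `K·s`; and every such pair gives a triple with trivial annihilator incident with the
line. -/
theorem stmt9 (K : Type) [Field K] (V : Type) [CommRing V] [Algebra K V] (r s : V)
    (hV : GoodAlg K V r s)
    (x₁ y₁ z₁ x₂ y₂ z₂ a b c : V)
    (hP₁ : TrivAnn (x₁, y₁, z₁)) (hP₂ : TrivAnn (x₂, y₂, z₂))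
    (hnn : ¬ Nbr (x₁, y₁, z₁) (x₂, y₂, z₂))
    (hL : TrivAnn (a, b, c))
    (h₁ : Incid (x₁, y₁, z₁) (a, b, c)) (h₂ : Incid (x₂, y₂, z₂) (a, b, c)) :
    (∀ q : V × V × V, TrivAnn q → Incid q (a, b, c) →
      ∃ a₁ a₂ : V,
        (¬ ((∃ k : K, a₁ = k • r) ∧ (∃ k : K, a₂ = k • r))) ∧
        (¬ ((∃ k : K, a₁ = k • s) ∧ (∃ k : K, a₂ = k • s))) ∧
        SameCls (a₁ * x₁ + a₂ * x₂, a₁ * y₁ + a₂ * y₂, a₁ * z₁ + a₂ * z₂) q) ∧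
    (∀ a₁ a₂ : V,
      (¬ ((∃ k : K, a₁ = k • r) ∧ (∃ k : K, a₂ = k • r))) →
      (¬ ((∃ k : K, a₁ = k • s) ∧ (∃ k : K, a₂ = k • s))) →
      TrivAnn (a₁ * x₁ + a₂ * x₂, a₁ * y₁ + a₂ * y₂, a₁ * z₁ + a₂ * z₂) ∧
      Incid (a₁ * x₁ + a₂ * x₂, a₁ * y₁ + a₂ * y₂, a₁ * z₁ + a₂ * z₂) (a, b, c)) := by
  have key := stmt9_general hV.2.2 hL hnn h₁ h₂
  exact ⟨fun q hq hqL ↦ (key q).1 ⟨hq, hqL⟩,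
    fun a₁ a₂ hr hs ↦ (key _).2 ⟨a₁, a₂, hr, hs, SameCls.refl _⟩⟩
end
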